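/- arXiv:math/0508172 — 2 statements merged into one kernel-verified Lean document; each statement's English description precedes it below -/
import Mathlib

section
/- Let Z be a Peano continuum which admits no essential map to the circle, let A be a closed subset of Z, and let c, d ∈ Z \ A. If c and d are separated by A (i.e., they lie in different components of Z \ A), then c and d are separated by some connected component of A. -/
/-!
Two facts give the theorem.

*Unions* (`JoinedOff.union`). If `A`, `B` are disjoint closed sets and neither separates `c`
from `d`, then `A ∪ B` does not either. Otherwise let `U` be the component of `c` in the
complement of `A ∪ B`, and let `φ : Z → [0, 1]` vanish on `A` and equal `1` on `B`. The map
`f` which is `exp (iπφ)` on `U` and `exp (-iπφ)` off `U` is continuous, so, being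
nullhomotopic, it is `exp (ig)` for a continuous real function `g`. Off `B`, `f` has the
continuous logarithm equal to `πφ` on `U` and `-πφ` elsewhere; off `A`, it has the continuous
logarithm equal to `πφ` on `U` and `2π - πφ` elsewhere. Each differs from `g` by a constant on
any connected set where it is defined. Comparing the values at `c` and `d` along a connected
set missing `A` and along one missing `B` gives `2π = 0`.

*Chains* (`JoinedOff.of_sInter`). By local connectedness, the intersection of a chain of closed
sets separating `c` from `d` separates them too.

By Zorn's lemma `A` contains a minimal closed set separating `c` from `d`. By the first fact it
is connected, so it lies in a component of `A`, which then separates `c` from `d`.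
-/

open Set Filter Topology Pointwise

/-- The set `E` separates the points `x` and `y`: both lie outside `E` and in
different connected components of the complement of `E`. -/
def SepPts {X : Type*} [TopologicalSpace X] (E : Set X) (x y : X) : Prop :=
  x ∉ E ∧ y ∉ E ∧ connectedComponentIn Eᶜ x ≠ connectedComponentIn Eᶜ y

/-- The set `E` separates the set `Y ⊆ X \ E`: two points of `Y` lie in different
connected components of the complement of `E`. -/
def SepSet {X : Type*} [TopologicalSpace X] (E Y : Set X) : Prop :=
  Y ⊆ Eᶜ ∧ ∃ x ∈ Y, ∃ y ∈ Y, connectedComponentIn Eᶜ x ≠ connectedComponentIn Eᶜ y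

/-- Two (closed) sets `A` and `B` cross: they intersect, or each separates the other. -/
def Crosses {X : Type*} [TopologicalSpace X] (A B : Set X) : Prop :=
  (A ∩ B).Nonempty ∨ (SepSet A B ∧ SepSet B A)

/-- There is a (finite) crossing sequence in `𝓐` from `A` to `B`. -/
def CrossSeqFromTo {X : Type*} [TopologicalSpace X] (𝓐 : Set (Set X)) (A B : Set X) : Prop :=
  ∃ (n : ℕ) (c : ℕ → Set X), c 0 = A ∧ c n = B ∧ (∀ i ≤ n, c i ∈ 𝓐) ∧
    ∀ i < n, Crosses (c i) (c (i + 1))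

/-- A collection `𝓐` is cross-connected: any two of its elements are joined by a
crossing sequence in `𝓐`. -/
def CrossConnected {X : Type*} [TopologicalSpace X] (𝓐 : Set (Set X)) : Prop :=
  ∀ A ∈ 𝓐, ∀ B ∈ 𝓐, CrossSeqFromTo 𝓐 A B

/-- There is a crossing sequence `A, A_1, …, A_n, B` in `𝓐` (with `n ≥ 1`) whose
intermediate terms `A_1, …, A_n` are disjoint from `D`. -/
def CrossSeqAvoiding {X : Type*} [TopologicalSpace X] (𝓐 : Set (Set X)) (A B D : Set X) :
    Prop :=
  ∃ n : ℕ, 1 ≤ n ∧ ∃ c : ℕ → Set X, c 0 = A ∧ c (n + 1) = B ∧ (∀ i ≤ n + 1, c i ∈ 𝓐) ∧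
    (∀ i ≤ n, Crosses (c i) (c (i + 1))) ∧ ∀ i, 1 ≤ i → i ≤ n → c i ∩ D = ∅

/-- A collection of subsets of a metric space is null if for every `ε > 0` only finitely
many of its members have diameter greater than `ε`. -/
def NullFam {X : Type*} [PseudoMetricSpace X] (𝓐 : Set (Set X)) : Prop :=
  ∀ ε : ℝ, 0 < ε → {A ∈ 𝓐 | ε < Metric.diam A}.Finite

/-- A collection `𝓐` is fine if any two distinct points are separated by the union of
some finite subcollection of `𝓐`. -/
def FineFam {X : Type*} [PseudoMetricSpace X] (𝓐 : Set (Set X)) : Prop :=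
  ∀ x y : X, x ≠ y → ∃ 𝓑 ⊆ 𝓐, 𝓑.Finite ∧ SepPts (⋃₀ 𝓑) x y

/-- A sequence of maps `T i : X → X` acts as a convergence sequence on the subset `A`,
with repeller `n ∈ A` and attractor `p ∈ A`: for every compact `C ⊆ A \ {n}` and every
open neighborhood `U` of `p`, eventually `T i '' C ⊆ U`. -/
def ConvSeqOn {X : Type*} [TopologicalSpace X] (A : Set X) (T : ℕ → X → X) (n p : X) :
    Prop :=
  n ∈ A ∧ p ∈ A ∧ ∀ C : Set X, C ⊆ A → IsCompact C → n ∉ C →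
    ∀ U : Set X, IsOpen U → p ∈ U → ∀ᶠ i in atTop, T i '' C ⊆ U

/-- The stabilizer of a subset `A ⊆ X` in `G`. -/
def stab (G : Type*) {X : Type*} [Group G] [MulAction G X] (A : Set X) : Set G :=
  {g : G | g • A = A}

/-- The subset `S` of the group `G` acts as a convergence group on `A ⊆ X`: every
sequence of distinct elements of `S` has a subsequence acting as a convergence
sequence on `A`. -/
def ConvGroupOn {G X : Type*} [Group G] [MulAction G X] [TopologicalSpace X]
    (S : Set G) (A : Set X) : Prop :=
  ∀ g : ℕ → G, (∀ i, g i ∈ S) → Function.Injective g →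
    ∃ k : ℕ → ℕ, StrictMono k ∧ ∃ n p : X,
      ConvSeqOn A (fun i => (g (k i) • · : X → X)) n p

/-- `(G, 𝓐)` is a local convergence pairing on `X`. -/
structure IsLocalConvPairing (G : Type*) {X : Type*} [Group G] [MulAction G X]
    [MetricSpace X] (𝓐 : Set (Set X)) : Prop where
  closed : ∀ A ∈ 𝓐, IsClosed A
  invariant : ∀ g : G, ∀ A ∈ 𝓐, g • A ∈ 𝓐
  big : ∀ A ∈ 𝓐, 2 < A.encard
  null : NullFam 𝓐
  fine : FineFam 𝓐
  stabConv : ∀ A ∈ 𝓐, ConvGroupOn (stab G A) A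
  connect : ∀ A ∈ 𝓐, ∀ B ∈ 𝓐, (A ∩ B).encard ≤ 2 →
    (∀ c : X, A ∩ B = {c} → ∀ b ∈ B, b ≠ c → CrossSeqAvoiding 𝓐 A B {b, c}) ∧
    ((¬ ∃ c : X, A ∩ B = {c}) → CrossSeqAvoiding 𝓐 A B (A ∩ B))

/-- Some connected set containing `c` and `d` misses `E`; that is, `c` and `d` lie outside `E`
and are not separated by it. -/
def JoinedOff {X : Type*} [TopologicalSpace X] (E : Set X) (c d : X) : Prop :=
  ∃ S : Set X, IsPreconnected S ∧ S ⊆ Eᶜ ∧ c ∈ S ∧ d ∈ S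

section JoinedOff

variable {X : Type*} [TopologicalSpace X] {E F : Set X} {c d e : X}

lemma JoinedOff.mono (h : JoinedOff E c d) (hFE : F ⊆ E) : JoinedOff F c d := by
  obtain ⟨S, hS, hSE, hc, hd⟩ := h
  exact ⟨S, hS, hSE.trans (compl_subset_compl.2 hFE), hc, hd⟩

lemma JoinedOff.trans (h : JoinedOff E c d) (h' : JoinedOff E d e) : JoinedOff E c e := by
  obtain ⟨S, hS, hSE, hc, hd⟩ := h
  obtain ⟨T, hT, hTE, hd', he⟩ := h'
  exact ⟨S ∪ T, hS.union d hd hd' hT, union_subset hSE hTE, .inl hc, .inr he⟩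

lemma JoinedOff.symm (h : JoinedOff E c d) : JoinedOff E d c := by
  obtain ⟨S, hS, hSE, hc, hd⟩ := h
  exact ⟨S, hS, hSE, hd, hc⟩

lemma joinedOff_of_mem (hc : c ∉ E) (hd : d ∈ connectedComponentIn Eᶜ c) : JoinedOff E c d :=
  ⟨_, isPreconnected_connectedComponentIn, connectedComponentIn_subset _ _,
    mem_connectedComponentIn hc, hd⟩

lemma joinedOff_iff (hc : c ∉ E) (hd : d ∉ E) :
    JoinedOff E c d ↔ connectedComponentIn Eᶜ c = connectedComponentIn Eᶜ d := by
  constructor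
  · rintro ⟨S, hS, hSE, hcS, hdS⟩
    exact connectedComponentIn_eq (hS.subset_connectedComponentIn hcS hSE hdS)
  · intro h
    exact joinedOff_of_mem hc (h ▸ mem_connectedComponentIn hd)

/-- If every member of a nonempty chain of closed sets separates `c` from `d`, then so does the
intersection, stated contrapositively. The points that can be joined to `c` off some member of
the chain form an open set which is closed relative to the complement of the intersection. -/
lemma JoinedOff.of_sInter [LocallyConnectedSpace X] {𝒞 : Set (Set X)}
    (hcl : ∀ E ∈ 𝒞, IsClosed E) (hch : IsChain (· ⊆ ·) 𝒞) (h : JoinedOff (⋂₀ 𝒞) c d) :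
    ∃ E ∈ 𝒞, JoinedOff E c d := by
  obtain ⟨S, hS, hSE, hc, hd⟩ := h
  have hmem : ∀ z ∈ S, ∃ E ∈ 𝒞, z ∉ E := by
    intro z hz
    simpa using hSE hz
  have hnhds : ∀ E ∈ 𝒞, ∀ z ∉ E, connectedComponentIn Eᶜ z ∈ 𝓝 z := fun E hE z hz =>
    (hcl E hE).isOpen_compl.connectedComponentIn.mem_nhds (mem_connectedComponentIn hz)
  set W : Set X := {z | ∃ E ∈ 𝒞, JoinedOff E c z} with hW
  have hWo : IsOpen W := by
    rw [isOpen_iff_mem_nhds]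
    rintro z ⟨E, hE, hj⟩
    have hzE : z ∉ E := by
      obtain ⟨T, -, hTE, -, hz⟩ := hj
      exact hTE hz
    filter_upwards [hnhds E hE z hzE] with w hw
    exact ⟨E, hE, hj.trans (joinedOff_of_mem hzE hw)⟩
  refine hS.subset_of_closure_inter_subset hWo ⟨c, hc, ?_⟩ ?_ hd
  · obtain ⟨E, hE, hcE⟩ := hmem c hc
    exact ⟨E, hE, joinedOff_of_mem hcE (mem_connectedComponentIn hcE)⟩
  · rintro z ⟨hzW, hzS⟩
    obtain ⟨E, hE, hzE⟩ := hmem z hzS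
    obtain ⟨w, hwN, E', hE', hj⟩ := mem_closure_iff_nhds.1 hzW _ (hnhds E hE z hzE)
    have hj' := (joinedOff_of_mem hzE hwN).symm
    -- the smaller of the two members of the chain works for both connected sets
    rcases hch.total hE hE' with hsub | hsub
    · exact ⟨E, hE, (hj.mono hsub).trans hj'⟩
    · exact ⟨E', hE', hj.trans (hj'.mono hsub)⟩

end JoinedOff

lemma exists_lift_of_nullhomotopic {X : Type*} [TopologicalSpace X] (f : C(X, Circle))
    (hf : f.Nullhomotopic) : ∃ g : C(X, ℝ), ∀ x, Circle.exp (g x) = f x := by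
  obtain ⟨y, hy⟩ := hf
  obtain ⟨H⟩ := hy.symm
  obtain ⟨t, ht⟩ : ∃ t : ℝ, Circle.exp t = y := ⟨_, Circle.exp_arg y⟩
  have H0 : ∀ a, H.toContinuousMap (0, a) = Circle.exp (ContinuousMap.const X t a) := by
    intro a
    simp [ht]
  refine ⟨(Circle.isCoveringMap_exp.liftHomotopy H.toContinuousMap (.const X t) H0).comp
    ⟨fun x => (1, x), by fun_prop⟩, fun x => ?_⟩
  have h1 := congr_fun
    (Circle.isCoveringMap_exp.liftHomotopy_lifts H.toContinuousMap (.const X t) H0) (1, x)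
  exact h1.trans (H.apply_one x)

/-- Two continuous logarithms of the same circle-valued map differ by a constant on a connected
set. -/
lemma sub_eq_sub_of_exp_eq {X : Type*} [TopologicalSpace X] {S : Set X} (hS : IsPreconnected S)
    {g L : X → ℝ} (hg : ContinuousOn g S) (hL : ContinuousOn L S)
    (h : ∀ x ∈ S, Circle.exp (g x) = Circle.exp (L x)) {x y : X} (hx : x ∈ S) (hy : y ∈ S) :
    g x - L x = g y - L y := by
  have himg : (fun z => g z - L z) '' S ⊆ range (fun m : ℤ => (m : ℝ) * (2 * Real.pi)) := by
    rintro _ ⟨z, hz, rfl⟩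
    obtain ⟨m, hm⟩ := Circle.exp_eq_exp.1 (h z hz)
    exact ⟨m, by simp only; linarith⟩
  exact (countable_range _).isTotallyDisconnected _ himg (hS.image _ (hg.sub hL))
    (mem_image_of_mem _ hx) (mem_image_of_mem _ hy)

/-- A union of two disjoint closed sets, neither of which separates `c` from `d`, does not
separate them, provided that every map to the circle is nullhomotopic. -/
lemma JoinedOff.union {Z : Type*} [TopologicalSpace Z] [NormalSpace Z] [LocallyConnectedSpace Z]
    (hcirc : ∀ f : C(Z, Circle), f.Nullhomotopic) {A B : Set Z} (hA : IsClosed A)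
    (hB : IsClosed B) (hAB : Disjoint A B) {c d : Z} (hjA : JoinedOff A c d)
    (hjB : JoinedOff B c d) : JoinedOff (A ∪ B) c d := by
  classical
  obtain ⟨S, hS, hSA, hcS, hdS⟩ := hjA
  obtain ⟨T, hT, hTB, hcT, hdT⟩ := hjB
  have hcAB : c ∉ A ∪ B := fun h => h.elim (hSA hcS) (hTB hcT)
  have hdAB : d ∉ A ∪ B := fun h => h.elim (hSA hdS) (hTB hdT)
  by_contra hnot
  obtain ⟨φ, hφA, hφB, -⟩ := exists_continuous_zero_one_of_isClosed hA hB hAB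
  have hO : IsOpen (A ∪ B)ᶜ := (hA.union hB).isOpen_compl
  set U : Set Z := connectedComponentIn (A ∪ B)ᶜ c with hU
  have hUo : IsOpen U := hO.connectedComponentIn
  have hcU : c ∈ U := mem_connectedComponentIn hcAB
  have hdU : d ∉ U := fun h => hnot (joinedOff_of_mem hcAB h)
  -- a component is relatively closed, so its frontier lies in `A ∪ B`
  have hfr : frontier U ⊆ A ∪ B := by
    intro z hz
    by_contra hzAB
    rw [hUo.frontier_eq] at hz
    obtain ⟨w, hw, hwU⟩ := mem_closure_iff_nhds.1 hz.1 _
      (hO.connectedComponentIn.mem_nhds (mem_connectedComponentIn hzAB))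
    apply hz.2
    rw [hU, connectedComponentIn_eq hwU, ← connectedComponentIn_eq hw]
    exact mem_connectedComponentIn hzAB
  set L₁ : Z → ℝ := fun z =>
    if z ∈ U then Real.pi * φ z else 2 * Real.pi - Real.pi * φ z with hL₁
  set L₂ : Z → ℝ := fun z => if z ∈ U then Real.pi * φ z else -(Real.pi * φ z) with hL₂
  have hL₁c : ContinuousOn L₁ Aᶜ := by
    refine ContinuousOn.if ?_ (by fun_prop) (by fun_prop)
    rintro z ⟨hzA, hz⟩
    have hzB : φ z = 1 := hφB ((hfr hz).resolve_left hzA)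
    rw [hzB]; ring
  have hL₂c : ContinuousOn L₂ Bᶜ := by
    refine ContinuousOn.if ?_ (by fun_prop) (by fun_prop)
    rintro z ⟨hzB, hz⟩
    have hzA : φ z = 0 := hφA ((hfr hz).resolve_right hzB)
    rw [hzA]; ring
  have hL : ∀ z, Circle.exp (L₂ z) = Circle.exp (L₁ z) := by
    intro z
    by_cases hz : z ∈ U
    · simp [hL₁, hL₂, hz]
    · rw [Circle.exp_eq_exp]
      refine ⟨-1, ?_⟩
      simp only [hL₁, hL₂, hz, if_false]
      push_cast; ring
  have hfc : Continuous fun z => Circle.exp (L₂ z) := by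
    rw [continuous_iff_continuousAt]
    intro z
    by_cases hz : z ∈ B
    · have hzA : z ∈ Aᶜ := fun h => disjoint_left.1 hAB h hz
      simp only [hL]
      exact Circle.exp.continuous.continuousAt.comp
        (hL₁c.continuousAt (hA.isOpen_compl.mem_nhds hzA))
    · exact Circle.exp.continuous.continuousAt.comp
        (hL₂c.continuousAt (hB.isOpen_compl.mem_nhds hz))
  obtain ⟨g, hg⟩ := exists_lift_of_nullhomotopic ⟨_, hfc⟩ (hcirc _)
  have h₁ := sub_eq_sub_of_exp_eq hS g.continuous.continuousOn (hL₁c.mono hSA)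
    (fun z _ => (hg z).trans (hL z)) hcS hdS
  have h₂ := sub_eq_sub_of_exp_eq hT g.continuous.continuousOn (hL₂c.mono hTB)
    (fun z _ => hg z) hcT hdT
  simp only [hL₁, hL₂, hcU, hdU, if_true, if_false] at h₁ h₂
  linarith [Real.pi_pos]

/-- Corollary: in a Peano continuum admitting no essential map to the circle, if a
closed set `A` separates `c` from `d`, then some connected component of `A` separates
`c` from `d`. -/
theorem separated_by_component {Z : Type*} [MetricSpace Z] [CompactSpace Z]
    [ConnectedSpace Z] [LocallyConnectedSpace Z]
    (hcirc : ∀ f : C(Z, Circle), f.Nullhomotopic)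
    (A : Set Z) (hA : IsClosed A) (c d : Z) (hc : c ∉ A) (hd : d ∉ A)
    (hsep : connectedComponentIn Aᶜ c ≠ connectedComponentIn Aᶜ d) :
    ∃ x ∈ A, SepPts (connectedComponentIn A x) c d := by
  obtain ⟨B, hBA, hBmin⟩ := zorn_superset_nonempty {E : Set Z | IsClosed E ∧ ¬ JoinedOff E c d}
    (by
      intro 𝒞 h𝒞 hch hne
      refine ⟨⋂₀ 𝒞, ⟨isClosed_sInter fun E hE => (h𝒞 hE).1, fun hj => ?_⟩,
        fun E hE => sInter_subset_of_mem hE⟩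
      obtain ⟨E, hE, hjE⟩ := hj.of_sInter (fun E hE => (h𝒞 hE).1) hch
      exact (h𝒞 hE).2 hjE)
    A ⟨hA, fun hj => hsep ((joinedOff_iff hc hd).1 hj)⟩
  obtain ⟨hBcl, hBsep⟩ := hBmin.prop
  have hsmall : ∀ E, IsClosed E → E ⊆ B → ¬ B ⊆ E → JoinedOff E c d := by
    intro E hE hEB hBE
    by_contra hj
    exact hBE (hBmin.le_of_le ⟨hE, hj⟩ hEB)
  have hBne : B.Nonempty := by
    by_contra hemp
    rw [not_nonempty_iff_eq_empty] at hemp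
    exact hBsep ⟨univ, isPreconnected_univ, by simp [hemp], trivial, trivial⟩
  have hBconn : IsPreconnected B := by
    rw [isPreconnected_iff_subset_of_fully_disjoint_closed hBcl]
    intro u v hu hv huv hdisj
    by_contra! hnot
    have hju := hsmall (B ∩ u) (hBcl.inter hu) inter_subset_left
      fun h => hnot.1 (h.trans inter_subset_right)
    have hjv := hsmall (B ∩ v) (hBcl.inter hv) inter_subset_left
      fun h => hnot.2 (h.trans inter_subset_right)
    have hj := hju.union hcirc (hBcl.inter hu) (hBcl.inter hv)
      (hdisj.mono inter_subset_right inter_subset_right) hjv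
    rw [← inter_union_distrib_left, inter_eq_left.2 huv] at hj
    exact hBsep hj
  obtain ⟨x, hx⟩ := hBne
  have hcK : c ∉ connectedComponentIn A x := fun h => hc (connectedComponentIn_subset _ _ h)
  have hdK : d ∉ connectedComponentIn A x := fun h => hd (connectedComponentIn_subset _ _ h)
  refine ⟨x, hBA hx, hcK, hdK, fun heq => hBsep ?_⟩
  exact ((joinedOff_iff hcK hdK).2 heq).mono (hBconn.subset_connectedComponentIn hx hBA)
end

section
/- Let X be a Peano continuum without cut points which admits no essential map to the circle, and let 𝓐 be a collection of connected closed subsets of X, each containing at least two points, such that 𝓐 is null and fine. Suppose A, B ∈ 𝓐 satisfy A ∩ B = {c} for a single point c, and let b ∈ B \ {c}. Then there is a crossing sequence A, A_1, …, A_n, B in 𝓐 with A_i ∩ {b, c} = ∅ for all 1 ≤ i ≤ n. -/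
/-!
Members of `𝓐` are connected, and the proof only produces crossings that are intersections.

Fix a small connected open neighbourhood `N` of `c`. By nullness it can be chosen so that it misses
`b` and so that every member of `𝓐` that contains `b` and meets `N` contains `c`. Since `X` has no
essential map to the circle, two disjoint closed sets neither of which separates `x` from `y` have
a union that does not separate `x` from `y` (`janiszewski`). Applied to `{c}` and `Nᶜ`, this shows
that `N \ {c}` is connected, so a continuum `P ⊆ N \ {c}` joins a point `a` of `A` to a point of
`B`. By fineness and compactness a finite subfamily of `𝓐`, none of whose members contains `c`, has
a union for which the complementary component `U` of `c` satisfies `closure U ⊆ N \ P`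
(`exists_finite_separating`). The frontier of `U` is covered by those members that meet `N`, and
these avoid both `b` and `c`.

Let `F_A` be the part of that frontier covered by the members reachable from `A` by a chain of
consecutively intersecting members, and `F_B` the part covered by the others. If no reachable
member meets `B`, then `F_A` and `F_B` are disjoint, `A` joins `c` to `a` off `F_B`, and `B ∪ P`
joins `c` to `a` off `F_A`. By `janiszewski` the frontier of `U` does not separate `c` from `a`,
which is absurd because `c ∈ U` and `a ∉ closure U`.
-/

open Set Filter Topology Pointwise

/-! ### Lifting circle-valued maps and Janiszewski's theorem -/

theorem exists_real_lift {X : Type*} [TopologicalSpace X] (f : C(X, Circle))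
    (hf : f.Nullhomotopic) : ∃ φ : C(X, ℝ), ∀ x, Circle.exp (φ x) = f x := by
  obtain ⟨y, hy⟩ := hf
  obtain ⟨H⟩ := hy.symm
  obtain ⟨t, ht⟩ : ∃ t : ℝ, Circle.exp t = y := ⟨_, Circle.exp_arg y⟩
  have H0 : ∀ x, H.toContinuousMap (0, x) = Circle.exp (ContinuousMap.const X t x) := by
    intro x
    simp [ht]
  let L := Circle.isCoveringMap_exp.liftHomotopy H.toContinuousMap (ContinuousMap.const X t) H0
  refine ⟨L.comp ((ContinuousMap.const X 1).prodMk (ContinuousMap.id X)), fun x ↦ ?_⟩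
  have h1 := congrFun (Circle.isCoveringMap_exp.liftHomotopy_lifts H.toContinuousMap
    (ContinuousMap.const X t) H0) (1, x)
  exact h1.trans (H.apply_one x)

theorem frontier_component_subset {X : Type*} [TopologicalSpace X] [LocallyConnectedSpace X]
    {E : Set X} (hE : IsClosed E) (x : X) :
    frontier (connectedComponentIn Eᶜ x) ⊆ E := by
  intro z hz
  by_contra hzE
  have hUo : IsOpen (connectedComponentIn Eᶜ x) := hE.isOpen_compl.connectedComponentIn
  have hVo : IsOpen (connectedComponentIn Eᶜ z) := hE.isOpen_compl.connectedComponentIn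
  rw [hUo.frontier_eq] at hz
  obtain ⟨w, hwV, hwU⟩ := mem_closure_iff.1 hz.1 _ hVo (mem_connectedComponentIn hzE)
  apply hz.2
  rw [connectedComponentIn_eq hwU, ← connectedComponentIn_eq hwV]
  exact mem_connectedComponentIn hzE

/-- On a preconnected set, two real lifts of the same circle-valued function differ by a constant
multiple of `2π`. -/
theorem lift_sub_eq {X : Type*} [TopologicalSpace X] {S : Set X} (hS : IsPreconnected S)
    {φ θ : X → ℝ} (hφ : ContinuousOn φ S) (hθ : ContinuousOn θ S)
    (he : ∀ z, Circle.exp (φ z) = Circle.exp (θ z)) {x y : X} (hx : x ∈ S) (hy : y ∈ S) :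
    φ x - θ x = φ y - θ y := by
  obtain ⟨m, hm⟩ := Circle.exp_eq_exp.1 (he x)
  have h := Circle.isCoveringMap_exp.eqOn_of_comp_eqOn hS hφ
    (hθ.add (continuousOn_const (c := (m : ℝ) * (2 * Real.pi))))
    (fun z _ ↦ (he z).trans (Circle.exp_eq_exp.2 ⟨-m, by simp⟩)) hx hm hy
  have h' : φ y = θ y + m * (2 * Real.pi) := h
  linarith

/-- Janiszewski's theorem for disjoint closed sets. If `U` is the component of `x` off `F₁ ∪ F₂`
and `y ∉ U`, then going from `F₁` to `F₂` through `U` along the upper half circle and back outside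
`U` along the lower half circle defines a map to the circle. A real lift of it would have to change
by incompatible amounts along `S₁` and `S₂`. -/
theorem janiszewski {X : Type*} [TopologicalSpace X] [NormalSpace X] [LocallyConnectedSpace X]
    (hcirc : ∀ f : C(X, Circle), f.Nullhomotopic)
    {F₁ F₂ : Set X} (h₁ : IsClosed F₁) (h₂ : IsClosed F₂) (hd : Disjoint F₁ F₂)
    {x y : X} {S₁ S₂ : Set X} (hS₁ : IsPreconnected S₁) (hS₂ : IsPreconnected S₂)
    (hx₁ : x ∈ S₁) (hy₁ : y ∈ S₁) (hx₂ : x ∈ S₂) (hy₂ : y ∈ S₂)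
    (hSF₁ : Disjoint S₁ F₁) (hSF₂ : Disjoint S₂ F₂) :
    y ∈ connectedComponentIn (F₁ ∪ F₂)ᶜ x := by
  classical
  by_contra hy
  set U := connectedComponentIn (F₁ ∪ F₂)ᶜ x with hU
  have hxF : x ∈ (F₁ ∪ F₂)ᶜ := by
    rintro (h | h)
    · exact hSF₁.le_bot ⟨hx₁, h⟩
    · exact hSF₂.le_bot ⟨hx₂, h⟩
  have hxU : x ∈ U := mem_connectedComponentIn hxF
  have hfr : frontier U ⊆ F₁ ∪ F₂ := frontier_component_subset (h₁.union h₂) x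
  obtain ⟨g, hg₁, hg₂, -⟩ := exists_continuous_zero_one_of_isClosed h₁ h₂ hd
  -- `θ` is the angle normalised to vanish on `F₁`, `ψ` the one normalised to be `π` on `F₂`.
  let θ : X → ℝ := fun z ↦ if z ∈ U then Real.pi * g z else -(Real.pi * g z)
  let ψ : X → ℝ := fun z ↦ if z ∈ U then Real.pi * g z else 2 * Real.pi - Real.pi * g z
  have hθψ : ∀ z, Circle.exp (θ z) = Circle.exp (ψ z) := by
    intro z
    by_cases hz : z ∈ U
    · simp [θ, ψ, hz]
    · refine Circle.exp_eq_exp.2 ⟨-1, ?_⟩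
      simp only [θ, ψ, hz, if_false]
      push_cast
      ring
  have hθc : ContinuousOn θ S₂ := by
    refine ContinuousOn.if ?_ (by fun_prop) (by fun_prop)
    rintro z ⟨hz, hzf⟩
    rcases hfr hzf with h | h
    · simp [hg₁ h]
    · exact (hSF₂.le_bot ⟨hz, h⟩).elim
  have hψc : ContinuousOn ψ S₁ := by
    refine ContinuousOn.if ?_ (by fun_prop) (by fun_prop)
    rintro z ⟨hz, hzf⟩
    rcases hfr hzf with h | h
    · exact (hSF₁.le_bot ⟨hz, h⟩).elim
    · simp [hg₂ h]
      ring
  have hfc : Continuous (fun z ↦ Circle.exp (θ z)) := by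
    have : (fun z ↦ Circle.exp (θ z)) = fun z ↦ if z ∈ U then Circle.exp (Real.pi * g z)
        else Circle.exp (-(Real.pi * g z)) := by
      funext z
      by_cases hz : z ∈ U <;> simp [θ, hz]
    rw [this]
    refine Continuous.if ?_ (by fun_prop) (by fun_prop)
    intro z hzf
    rcases hfr hzf with h | h
    · simp [hg₁ h]
    · refine Circle.exp_eq_exp.2 ⟨1, ?_⟩
      simp [hg₂ h]
      ring
  obtain ⟨φ, hφ⟩ := exists_real_lift ⟨_, hfc⟩ (hcirc _)
  have e₁ := lift_sub_eq hS₁ φ.continuous.continuousOn hψc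
    (fun z ↦ (hφ z).trans (hθψ z)) hx₁ hy₁
  have e₂ := lift_sub_eq hS₂ φ.continuous.continuousOn hθc (fun z ↦ hφ z) hx₂ hy₂
  simp only [θ, ψ, hxU, hy, if_true, if_false] at e₁ e₂
  linarith [Real.pi_pos]

/-! ### Continua and finite separating families -/

theorem Set.Finite.isClosed_sUnion {X : Type*} [TopologicalSpace X] {𝓑 : Set (Set X)}
    (h : 𝓑.Finite) (hcl : ∀ F ∈ 𝓑, IsClosed F) : IsClosed (⋃₀ 𝓑) := by
  rw [sUnion_eq_biUnion]
  exact h.isClosed_biUnion hcl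

theorem exists_continuum_joining {X : Type*} [MetricSpace X] [CompactSpace X]
    [LocallyConnectedSpace X] {O : Set X} (hO : IsOpen O) (hOc : IsPreconnected O)
    {x y : X} (hx : x ∈ O) (hy : y ∈ O) :
    ∃ P ⊆ O, IsClosed P ∧ IsPreconnected P ∧ x ∈ P ∧ y ∈ P := by
  refine hOc.induction₂
    (fun x y ↦ ∃ P ⊆ O, IsClosed P ∧ IsPreconnected P ∧ x ∈ P ∧ y ∈ P) ?_ ?_ ?_ hx hy
  · intro z hz
    obtain ⟨ε, hε, hball⟩ := Metric.nhds_basis_closedBall.mem_iff.1 (hO.mem_nhds hz)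
    have hV : connectedComponentIn (Metric.ball z ε) z ∈ 𝓝 z :=
      connectedComponentIn_mem_nhds (Metric.ball_mem_nhds z hε)
    filter_upwards [mem_nhdsWithin_of_mem_nhds hV] with w hw
    refine ⟨closure (connectedComponentIn (Metric.ball z ε) z), ?_, isClosed_closure,
      isPreconnected_connectedComponentIn.closure,
      subset_closure (mem_connectedComponentIn (Metric.mem_ball_self hε)), subset_closure hw⟩
    exact (closure_minimal ((connectedComponentIn_subset _ _).trans Metric.ball_subset_closedBall)
      Metric.isClosed_closedBall).trans hball
  · rintro u v w - - - ⟨P, hPO, hP, hPc, hu, hv⟩ ⟨Q, hQO, hQ, hQc, hv', hw⟩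
    exact ⟨P ∪ Q, union_subset hPO hQO, hP.union hQ, hPc.union v hv hv' hQc, .inl hu, .inr hw⟩
  · rintro u v - - ⟨P, hPO, hP, hPc, hu, hv⟩
    exact ⟨P, hPO, hP, hPc, hv, hu⟩

/-- Fineness upgraded by compactness: a finite subfamily separates `c` from a neighbourhood of a
closed set not containing `c`. -/
theorem exists_finite_separating {X : Type*} [MetricSpace X] [CompactSpace X]
    [LocallyConnectedSpace X] {𝓐 : Set (Set X)} (hclosed : ∀ A ∈ 𝓐, IsClosed A)
    (hfine : FineFam 𝓐) {Z : Set X} (hZ : IsClosed Z) {c : X} (hc : c ∉ Z) :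
    ∃ 𝓔 ⊆ 𝓐, 𝓔.Finite ∧ c ∉ ⋃₀ 𝓔 ∧ Disjoint (closure (connectedComponentIn (⋃₀ 𝓔)ᶜ c)) Z := by
  have hex : ∀ z, ∃ 𝓑 ⊆ 𝓐, 𝓑.Finite ∧ (z ∈ Z → SepPts (⋃₀ 𝓑) z c) := by
    intro z
    by_cases hz : z ∈ Z
    · obtain ⟨𝓑, h1, h2, h3⟩ := hfine z c (fun h ↦ hc (h ▸ hz))
      exact ⟨𝓑, h1, h2, fun _ ↦ h3⟩
    · exact ⟨∅, empty_subset _, finite_empty, fun h ↦ absurd h hz⟩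
  choose 𝓑 h𝓑 hfin hsep using hex
  have hop : ∀ z, IsOpen (⋃₀ 𝓑 z)ᶜ := fun z ↦
    ((hfin z).isClosed_sUnion fun F hF ↦ hclosed F (h𝓑 z hF)).isOpen_compl
  obtain ⟨t, htZ, ht⟩ := hZ.isCompact.elim_nhds_subcover
    (fun z ↦ connectedComponentIn (⋃₀ 𝓑 z)ᶜ z)
    (fun z hz ↦ connectedComponentIn_mem_nhds ((hop z).mem_nhds (hsep z hz).1))
  refine ⟨⋃ z ∈ t, 𝓑 z, iUnion₂_subset fun z _ ↦ h𝓑 z,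
    t.finite_toSet.biUnion fun z _ ↦ hfin z, ?_, ?_⟩
  · rintro ⟨F, hF, hcF⟩
    obtain ⟨z, hz, hFz⟩ := mem_iUnion₂.1 hF
    exact (hsep z (htZ z hz)).2.1 ⟨F, hFz, hcF⟩
  · rw [Set.disjoint_right]
    intro w hwZ hw
    obtain ⟨z, hz, hwz⟩ := mem_iUnion₂.1 (ht hwZ)
    obtain ⟨v, hv, hvU⟩ := mem_closure_iff.1 hw _ (hop z).connectedComponentIn hwz
    have hsub : (⋃₀ (⋃ z ∈ t, 𝓑 z))ᶜ ⊆ (⋃₀ 𝓑 z)ᶜ :=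
      compl_subset_compl.2 (sUnion_subset_sUnion (subset_biUnion_of_mem (u := 𝓑) hz))
    have hvU' := connectedComponentIn_mono c hsub hvU
    exact (hsep z (htZ z hz)).2.2
      ((connectedComponentIn_eq hv).trans (connectedComponentIn_eq hvU').symm)

/-- By nullness, near `c` every member of the family that contains `b` also contains `c`. -/
theorem exists_good_nhd {X : Type*} [MetricSpace X] [CompactSpace X]
    [LocallyConnectedSpace X] {𝓐 : Set (Set X)} (hclosed : ∀ A ∈ 𝓐, IsClosed A)
    (hnull : NullFam 𝓐) {b c : X} (hbc : b ≠ c) :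
    ∃ N : Set X, IsOpen N ∧ IsPreconnected N ∧ c ∈ N ∧
      ∀ F ∈ 𝓐, b ∈ F → (F ∩ N).Nonempty → c ∈ F := by
  have hδ : 0 < dist b c / 2 := half_pos (dist_pos.2 hbc)
  set δ := dist b c / 2 with hδdef
  let 𝓕 : Set (Set X) := {F ∈ 𝓐 | δ / 2 < Metric.diam F} ∩ {F | c ∉ F}
  have h𝓕 : IsClosed (⋃₀ 𝓕) := ((hnull _ (half_pos hδ)).inter_of_left _).isClosed_sUnion
    fun F hF ↦ hclosed F hF.1.1
  have hO : IsOpen (Metric.ball c δ \ ⋃₀ 𝓕) := Metric.isOpen_ball.sdiff h𝓕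
  have hcO : c ∈ Metric.ball c δ \ ⋃₀ 𝓕 :=
    ⟨Metric.mem_ball_self hδ, fun ⟨F, hF, hcF⟩ ↦ hF.2 hcF⟩
  refine ⟨connectedComponentIn (Metric.ball c δ \ ⋃₀ 𝓕) c, hO.connectedComponentIn,
    isPreconnected_connectedComponentIn, mem_connectedComponentIn hcO, ?_⟩
  rintro F hF hbF ⟨z, hzF, hzN⟩
  by_contra hcF
  obtain ⟨hzb, hz𝓕⟩ := connectedComponentIn_subset _ _ hzN
  refine hz𝓕 ⟨F, ⟨⟨hF, ?_⟩, hcF⟩, hzF⟩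
  have h1 := Metric.dist_le_diam_of_mem (isCompact_univ.isBounded.subset (subset_univ F)) hbF hzF
  have h2 := dist_triangle b z c
  have h3 : dist z c < δ := hzb
  linarith

theorem IsPreconnected.exists_ne_mem_of_isOpen {X : Type*} [TopologicalSpace X] [T1Space X]
    {A N : Set X} (hA : IsPreconnected A) (hA2 : A.Nontrivial) (hN : IsOpen N) {c : X}
    (hcA : c ∈ A) (hcN : c ∈ N) : ∃ a ∈ A, a ∈ N ∧ a ≠ c := by
  obtain ⟨d, hd, hdc⟩ := hA2.exists_ne c
  by_contra! h
  obtain ⟨z, hz, hzN, hzc⟩ := hA N {c}ᶜ hN isOpen_compl_singleton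
    (fun z _ ↦ (em (z = c)).elim (fun e ↦ .inl (e ▸ hcN)) .inr) ⟨c, hcA, hcN⟩ ⟨d, hd, hdc⟩
  exact hzc (h z hz hzN)

/-! ### Chains of intersecting members -/

/-- `F` is the last term of a chain `A, A_1, …, A_n = F` of members of `𝓐` with `n ≥ 1` whose
consecutive terms intersect and whose terms after `A` avoid `D`. -/
def ReachAvoiding {X : Type*} (𝓐 : Set (Set X)) (A D F : Set X) : Prop :=
  ∃ n : ℕ, 1 ≤ n ∧ ∃ c : ℕ → Set X, c 0 = A ∧ c n = F ∧ (∀ i ≤ n, c i ∈ 𝓐) ∧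
    (∀ i < n, (c i ∩ c (i + 1)).Nonempty) ∧ ∀ i, 1 ≤ i → i ≤ n → c i ∩ D = ∅

theorem reachAvoiding_of_inter {X : Type*} {𝓐 : Set (Set X)} {A D F : Set X}
    (hA : A ∈ 𝓐) (hF : F ∈ 𝓐) (hAF : (A ∩ F).Nonempty) (hFD : F ∩ D = ∅) :
    ReachAvoiding 𝓐 A D F := by
  refine ⟨1, le_rfl, fun i ↦ if i = 0 then A else F, by simp, by simp, ?_, ?_, ?_⟩
  · intro i _
    dsimp only
    split_ifs <;> assumption
  · intro i hi
    obtain rfl : i = 0 := by omega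
    simpa using hAF
  · intro i hi _
    simpa [show i ≠ 0 by omega] using hFD

theorem ReachAvoiding.step {X : Type*} {𝓐 : Set (Set X)} {A D F G : Set X}
    (h : ReachAvoiding 𝓐 A D F) (hG : G ∈ 𝓐) (hFG : (F ∩ G).Nonempty) (hGD : G ∩ D = ∅) :
    ReachAvoiding 𝓐 A D G := by
  obtain ⟨n, hn, s, h0, hsn, hmem, hcr, hav⟩ := h
  refine ⟨n + 1, by omega, fun i ↦ if i ≤ n then s i else G, by simpa using h0, by simp, ?_, ?_, ?_⟩
  · intro i _
    dsimp only
    split_ifs with hi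
    exacts [hmem i hi, hG]
  · intro i hi
    by_cases hin : i < n
    · simpa [hin.le, show i + 1 ≤ n by omega] using hcr i hin
    · obtain rfl : i = n := by omega
      simpa [hsn] using hFG
  · intro i h1 _
    dsimp only
    split_ifs with hi
    exacts [hav i h1 hi, hGD]

theorem ReachAvoiding.crossSeqAvoiding {X : Type*} [TopologicalSpace X] {𝓐 : Set (Set X)}
    {A D F B : Set X} (h : ReachAvoiding 𝓐 A D F) (hB : B ∈ 𝓐) (hFB : (F ∩ B).Nonempty) :
    CrossSeqAvoiding 𝓐 A B D := by
  obtain ⟨n, hn, s, h0, hsn, hmem, hcr, hav⟩ := h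
  refine ⟨n, hn, fun i ↦ if i ≤ n then s i else B, by simpa using h0, by simp, ?_, ?_, ?_⟩
  · intro i _
    dsimp only
    split_ifs with hi
    exacts [hmem i hi, hB]
  · intro i hi
    left
    by_cases hin : i < n
    · simpa [hin.le, show i + 1 ≤ n by omega] using hcr i hin
    · obtain rfl : i = n := by omega
      simpa [hsn] using hFB
  · intro i h1 hi
    simpa [hi] using hav i h1 hi

/-! ### The crossing sequence -/

/-- Case II of the Main Theorem: if `A ∩ B = {c}` and `b ∈ B \ {c}`, then there is a
crossing sequence in `𝓐` from `A` to `B` whose intermediate terms avoid `{b, c}`. -/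
theorem crossing_avoiding_pair {X : Type*} [MetricSpace X] [CompactSpace X]
    [ConnectedSpace X] [LocallyConnectedSpace X]
    (hcut : ∀ x : X, IsPreconnected ({x}ᶜ : Set X))
    (hcirc : ∀ f : C(X, Circle), f.Nullhomotopic)
    (𝓐 : Set (Set X))
    (hclosed : ∀ A ∈ 𝓐, IsClosed A) (hconn : ∀ A ∈ 𝓐, IsConnected A)
    (hbig : ∀ A ∈ 𝓐, A.Nontrivial)
    (hnull : NullFam 𝓐) (hfine : FineFam 𝓐)
    (A B : Set X) (hA : A ∈ 𝓐) (hB : B ∈ 𝓐)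
    (c : X) (hAB : A ∩ B = {c}) (b : X) (hb : b ∈ B) (hbc : b ≠ c) :
    CrossSeqAvoiding 𝓐 A B {b, c} := by
  have hcAB : c ∈ A ∩ B := hAB ▸ mem_singleton c
  obtain ⟨N, hNo, hNc, hcN, hN⟩ := exists_good_nhd hclosed hnull hbc
  obtain ⟨a, haA, haN, hac⟩ :=
    (hconn A hA).isPreconnected.exists_ne_mem_of_isOpen (hbig A hA) hNo hcAB.1 hcN
  obtain ⟨d, hdB, hdN, hdc⟩ :=
    (hconn B hB).isPreconnected.exists_ne_mem_of_isOpen (hbig B hB) hNo hcAB.2 hcN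
  -- `c` is not a cut point of `N`.
  have hcomp : d ∈ connectedComponentIn ({c} ∪ Nᶜ)ᶜ a :=
    janiszewski hcirc isClosed_singleton hNo.isClosed_compl (by simpa using hcN) (hcut c) hNc
      hac hdc haN hdN disjoint_compl_left disjoint_compl_right
  have haO : a ∈ ({c} ∪ Nᶜ)ᶜ := by simp [hac, haN]
  obtain ⟨P, hPO, hPcl, hPc, haP, hdP⟩ := exists_continuum_joining
    (isClosed_singleton.union hNo.isClosed_compl).isOpen_compl.connectedComponentIn
    isPreconnected_connectedComponentIn (mem_connectedComponentIn haO) hcomp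
  have hcP : c ∉ P := fun h ↦ connectedComponentIn_subset _ _ (hPO h) (.inl rfl)
  obtain ⟨𝓔, h𝓔, hfin, hc𝓔, hdisj⟩ := exists_finite_separating hclosed hfine
    (hPcl.union hNo.isClosed_compl) (c := c) (by simp [hcP, hcN])
  set U := connectedComponentIn (⋃₀ 𝓔)ᶜ c with hU
  have h𝓔cl : IsClosed (⋃₀ 𝓔) := hfin.isClosed_sUnion fun F hF ↦ hclosed F (h𝓔 hF)
  have hUo : IsOpen U := h𝓔cl.isOpen_compl.connectedComponentIn
  have hcU : c ∈ U := mem_connectedComponentIn hc𝓔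
  have haU : a ∉ closure U := fun h ↦ hdisj.le_bot ⟨h, .inl haP⟩
  have hfrU : frontier U ⊆ ⋃₀ 𝓔 := frontier_component_subset h𝓔cl c
  have hfrN : frontier U ⊆ N := fun z hz ↦ by
    by_contra hzN
    exact hdisj.le_bot ⟨frontier_subset_closure hz, .inr hzN⟩
  have hav : ∀ F ∈ 𝓔, (F ∩ N).Nonempty → F ∩ {b, c} = ∅ := by
    intro F hF hFN
    have hcF : c ∉ F := fun h ↦ hc𝓔 ⟨F, hF, h⟩
    rw [← disjoint_iff_inter_eq_empty, Set.disjoint_right]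
    rintro z (rfl | rfl)
    · exact fun h ↦ hcF (hN F (h𝓔 hF) h hFN)
    · exact hcF
  by_contra hno
  let R : Set X → Prop := ReachAvoiding 𝓐 A {b, c}
  let F₁ : Set X := ⋃₀ {F ∈ 𝓔 | (F ∩ N).Nonempty ∧ R F} ∩ frontier U
  let F₂ : Set X := ⋃₀ {F ∈ 𝓔 | (F ∩ N).Nonempty ∧ ¬ R F} ∩ frontier U
  have hF₁ : IsClosed F₁ := ((hfin.subset (sep_subset _ _)).isClosed_sUnion
    fun F hF ↦ hclosed F (h𝓔 hF.1)).inter isClosed_frontier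
  have hF₂ : IsClosed F₂ := ((hfin.subset (sep_subset _ _)).isClosed_sUnion
    fun F hF ↦ hclosed F (h𝓔 hF.1)).inter isClosed_frontier
  have hF₁₂ : Disjoint F₁ F₂ := by
    rw [Set.disjoint_left]
    rintro z ⟨⟨F, ⟨hF, -, hFR⟩, hzF⟩, -⟩ ⟨⟨G, ⟨hG, hGN, hGR⟩, hzG⟩, -⟩
    exact hGR (hFR.step (h𝓔 hG) ⟨z, hzF, hzG⟩ (hav G hG hGN))
  have hAF₂ : Disjoint A F₂ := by
    rw [Set.disjoint_left]
    rintro z hzA ⟨⟨G, ⟨hG, hGN, hGR⟩, hzG⟩, -⟩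
    exact hGR (reachAvoiding_of_inter hA (h𝓔 hG) ⟨z, hzA, hzG⟩ (hav G hG hGN))
  have hBF₁ : Disjoint (B ∪ P) F₁ := by
    rw [Set.disjoint_left]
    rintro z (hzB | hzP) ⟨⟨F, ⟨hF, -, hFR⟩, hzF⟩, hzfr⟩
    · exact hno (hFR.crossSeqAvoiding hB ⟨z, hzF, hzB⟩)
    · exact hdisj.le_bot ⟨frontier_subset_closure hzfr, .inl hzP⟩
  have haC := janiszewski hcirc hF₁ hF₂ hF₁₂
    ((hconn B hB).isPreconnected.union d hdB hdP hPc) (hconn A hA).isPreconnected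
    (.inl hcAB.2) (.inr haP) hcAB.1 haA hBF₁ hAF₂
  have hcover : frontier U ⊆ F₁ ∪ F₂ := by
    intro z hz
    obtain ⟨F, hF, hzF⟩ := hfrU hz
    have hFN : (F ∩ N).Nonempty := ⟨z, hzF, hfrN hz⟩
    by_cases hR : R F
    · exact .inl ⟨⟨F, ⟨hF, hFN, hR⟩, hzF⟩, hz⟩
    · exact .inr ⟨⟨F, ⟨hF, hFN, hR⟩, hzF⟩, hz⟩
  have hcF : c ∈ (F₁ ∪ F₂)ᶜ := fun h ↦ by
    have : c ∈ frontier U := h.elim And.right And.right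
    rw [hUo.frontier_eq] at this
    exact this.2 hcU
  obtain ⟨z, -, hzU, hzU'⟩ := isPreconnected_connectedComponentIn (x := c) (F := (F₁ ∪ F₂)ᶜ)
    U (closure U)ᶜ hUo isClosed_closure.isOpen_compl
    (fun z hz ↦ by
      by_cases h : z ∈ closure U
      · left
        by_contra hzU
        exact connectedComponentIn_subset _ _ hz (hcover (hUo.frontier_eq ▸ ⟨h, hzU⟩))
      · exact .inr h)
    ⟨c, mem_connectedComponentIn hcF, hcU⟩ ⟨a, haC, haU⟩
  exact hzU' (subset_closure hzU)
end
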